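/- For every s with 0 < s < 1, the function h(s) = √(1 − s) · ∑_{k=0}^∞ s^k/√(4k + 1) is differentiable at s and 2√(1 − s)·h'(s) = ∑_{k=0}^∞ a_k s^k, where a_k = (2k + 2)/√(4k + 5) − (2k + 1)/√(4k + 1). -/

import Mathlib

/-- The function `h s = √(1 - s) · ∑ₖ sᵏ / √(4k + 1)`. -/
noncomputable def hFun (s : ℝ) : ℝ :=
  Real.sqrt (1 - s) * ∑' k : ℕ, s ^ k / Real.sqrt (4 * (k : ℝ) + 1)

/-!
For any power series `f = ∑ cₖ sᵏ`, the product rule gives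
`2 √(1 - s) (√(1 - s) f)' = 2 (1 - s) f' - f`, whose `k`-th coefficient is
`2 (k + 1) cₖ₊₁ - (2 k + 1) cₖ`. The coefficients `cₖ = 1 / √(4k + 1)` are bounded, so all of this
is valid for `|s| < 1`.
-/

open FormalMultilinearSeries

section PowerSeries

variable {𝕜 F : Type*} [NontriviallyNormedField 𝕜] [NormedAddCommGroup F] [NormedSpace 𝕜 F]

lemma one_le_radius_ofScalars_of_norm_le {c : ℕ → 𝕜} {C : ℝ} (hc : ∀ k, ‖c k‖ ≤ C) :
    1 ≤ (ofScalars 𝕜 c).radius := by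
  refine le_radius_of_bound _ C (r := 1) fun k ↦ ?_
  simpa using hc k

variable [CompleteSpace F] {p : FormalMultilinearSeries 𝕜 𝕜 F} {s : 𝕜}

lemma hasSum_pow_smul_coeff (hs : ‖s‖ₑ < p.radius) :
    HasSum (fun k ↦ s ^ k • p.coeff k) (p.sum s) := by
  simpa using p.hasSum (x := s) (by simpa using hs)

lemma differentiableAt_sum_of_enorm_lt_radius (hs : ‖s‖ₑ < p.radius) :
    DifferentiableAt 𝕜 p.sum s :=
  (FormalMultilinearSeries.hasFDerivAt_sum hs).differentiableAt

lemma hasSum_pow_smul_succ_nsmul_coeff_succ (hs : ‖s‖ₑ < p.radius) :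
    HasSum (fun k ↦ s ^ k • (k + 1) • p.coeff (k + 1)) (deriv p.sum s) := by
  have h := (hasSum_pow_smul_coeff (hs.trans_le p.radius_le_radius_derivSeries)).mapL
    (ContinuousLinearMap.apply 𝕜 F (1 : 𝕜))
  simpa [← fderiv_apply_one_eq_deriv, FormalMultilinearSeries.fderiv_sum hs] using h

lemma hasSum_pow_smul_nsmul_coeff (hs : ‖s‖ₑ < p.radius) :
    HasSum (fun k ↦ s ^ k • k • p.coeff k) (s • deriv p.sum s) := by
  rw [← hasSum_nat_add_iff' 1]
  simpa [pow_succ', mul_smul] using (hasSum_pow_smul_succ_nsmul_coeff_succ hs).const_smul s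

end PowerSeries

section SqrtOneSub

variable {F : Type*} [NormedAddCommGroup F] [NormedSpace ℝ F] {s : ℝ}

lemma hasDerivAt_sqrt_one_sub (hs : s < 1) :
    HasDerivAt (fun x ↦ √(1 - x)) (-1 / (2 * √(1 - s))) s :=
  ((hasDerivAt_id s).const_sub 1).sqrt (sub_pos.2 hs).ne'

lemma two_mul_sqrt_smul_deriv_sqrt_smul {f : ℝ → F} (hs : s < 1) (hf : DifferentiableAt ℝ f s) :
    (2 * √(1 - s)) • deriv (fun x ↦ √(1 - x) • f x) s = (2 * (1 - s)) • deriv f s - f s := by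
  have hsqrt : √(1 - s) ≠ 0 := (Real.sqrt_pos.2 (sub_pos.2 hs)).ne'
  have hsq : √(1 - s) * √(1 - s) = 1 - s := Real.mul_self_sqrt (sub_pos.2 hs).le
  have hcancel : 2 * √(1 - s) * (-1 / (2 * √(1 - s))) = -1 := by field_simp
  rw [((hasDerivAt_sqrt_one_sub hs).fun_smul hf.hasDerivAt).deriv, smul_add, smul_smul, smul_smul,
    hcancel, mul_assoc, hsq]
  module

variable [CompleteSpace F] {p : FormalMultilinearSeries ℝ ℝ F}

lemma hasSum_two_mul_sqrt_smul_deriv_sqrt_smul_sum (hs : s < 1) (hsp : ‖s‖ₑ < p.radius) :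
    HasSum (fun k : ℕ ↦ s ^ k •
        ((2 * (k + 1) : ℝ) • p.coeff (k + 1) - (2 * k + 1 : ℝ) • p.coeff k))
      ((2 * √(1 - s)) • deriv (fun x ↦ √(1 - x) • p.sum x) s) := by
  rw [two_mul_sqrt_smul_deriv_sqrt_smul hs (differentiableAt_sum_of_enorm_lt_radius hsp)]
  have hderiv := (hasSum_pow_smul_succ_nsmul_coeff_succ hsp).const_smul (2 : ℝ)
  have hmul_deriv := (hasSum_pow_smul_nsmul_coeff hsp).const_smul (2 : ℝ)
  convert! (hderiv.sub hmul_deriv).sub (hasSum_pow_smul_coeff hsp) using 1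
  · ext k
    module
  · module

end SqrtOneSub

/-- The coefficient `1 / √(4k + 1)` of `sᵏ` in the power series factor of `hFun`. -/
noncomputable def hCoeff (k : ℕ) : ℝ := (√(4 * k + 1))⁻¹

lemma norm_hCoeff_le_one (k : ℕ) : ‖hCoeff k‖ ≤ 1 := by
  have : 1 ≤ √(4 * (k : ℝ) + 1) := Real.one_le_sqrt.2 (by linarith [k.cast_nonneg (α := ℝ)])
  rw [hCoeff, Real.norm_of_nonneg (by positivity)]
  exact inv_le_one_of_one_le₀ this

lemma hCoeff_succ (k : ℕ) : hCoeff (k + 1) = (√(4 * k + 5))⁻¹ := by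
  rw [hCoeff]
  push_cast
  ring_nf

lemma hFun_eq_sqrt_smul_sum : hFun = fun s ↦ √(1 - s) • (ofScalars ℝ hCoeff).sum s := by
  ext s
  simp [hFun, hCoeff, FormalMultilinearSeries.sum, div_eq_mul_inv]

theorem hFun_hasDerivAt_general {s : ℝ} (hs : |s| < 1) :
    DifferentiableAt ℝ hFun s ∧
      HasSum (fun k : ℕ ↦ ((2 * (k : ℝ) + 2) / √(4 * (k : ℝ) + 5) -
          (2 * (k : ℝ) + 1) / √(4 * (k : ℝ) + 1)) * s ^ k)
        (2 * √(1 - s) * deriv hFun s) := by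
  have hs1 : s < 1 := (abs_lt.1 hs).2
  have hradius : ‖s‖ₑ < (ofScalars ℝ hCoeff).radius :=
    lt_of_lt_of_le (by simpa [enorm, ← NNReal.coe_lt_coe] using hs)
      (one_le_radius_ofScalars_of_norm_le norm_hCoeff_le_one)
  rw [hFun_eq_sqrt_smul_sum]
  refine ⟨(hasDerivAt_sqrt_one_sub hs1).differentiableAt.fun_smul
    (differentiableAt_sum_of_enorm_lt_radius hradius), ?_⟩
  refine (hasSum_two_mul_sqrt_smul_deriv_sqrt_smul_sum hs1 hradius).congr_fun fun k ↦ ?_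
  rw [coeff_ofScalars, coeff_ofScalars, hCoeff_succ, hCoeff]
  simp only [smul_eq_mul]
  ring

theorem hFun_hasDerivAt (s : ℝ) (hs0 : 0 < s) (hs1 : s < 1) :
    DifferentiableAt ℝ hFun s ∧
      2 * Real.sqrt (1 - s) * deriv hFun s =
        ∑' k : ℕ, ((2 * (k : ℝ) + 2) / Real.sqrt (4 * (k : ℝ) + 5) -
          (2 * (k : ℝ) + 1) / Real.sqrt (4 * (k : ℝ) + 1)) * s ^ k :=
  (hFun_hasDerivAt_general (abs_lt.2 ⟨by linarith, hs1⟩)).imp_right fun h ↦ h.tsum_eq.symm
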